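/- arXiv:2008.02152 — 9 statements merged into one kernel-verified Lean document; each statement's English description precedes it below -/
import Mathlib

section
/- Let H be a real Hilbert space, M₀ ⊆ H a closed linear subspace, r₀, r ∈ [0,1), and set M := S(M₀, r₀). Then S(M, r) = {v ∈ H : v ≠ 0 and inf_{u ∈ M, u ≠ 0} θ(u,v) ≤ arcsin r} ∪ {0}, i.e., a nonzero vector v belongs to S(M, r) exactly when the infimum over nonzero u ∈ M of the acute angle θ(u,v) is at most arcsin r. -/
open RealInnerProductSpace

/-- The conelike neighborhood `S(M, r)` of a set `M` in a real Hilbert space. -/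
noncomputable def coneNbhd {H : Type*} [NormedAddCommGroup H] [InnerProductSpace ℝ H]
    (M : Set H) (r : ℝ) : Set H :=
  {v | sInf {d : ℝ | ∃ u ∈ M, u ≠ 0 ∧ d = ‖v - u‖ / ‖u‖} ≤ r} ∪ {0}

/-- The acute angle between two vectors of a real inner product space. -/
noncomputable def acuteAngle {H : Type*} [NormedAddCommGroup H] [InnerProductSpace ℝ H]
    (x y : H) : ℝ :=
  Real.arccos (|⟪x, y⟫| / (‖x‖ * ‖y‖))

lemma cone_smul {H : Type*} [NormedAddCommGroup H] [InnerProductSpace ℝ H]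
    (M₀ : Submodule ℝ H) (r : ℝ) (c : ℝ) (hc : c ≠ 0) (v : H)
    (hv : v ∈ coneNbhd (M₀ : Set H) r) : c • v ∈ coneNbhd (M₀ : Set H) r := by
  rcases hv with hv | hv
  · left
    have : {d : ℝ | ∃ u ∈ (M₀ : Set H), u ≠ 0 ∧ d = ‖c • v - u‖ / ‖u‖}
        = {d : ℝ | ∃ u ∈ (M₀ : Set H), u ≠ 0 ∧ d = ‖v - u‖ / ‖u‖} := by
      have hc' : |c| ≠ 0 := abs_ne_zero.mpr hc
      ext d
      constructor
      · rintro ⟨u, hu, hu0, rfl⟩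
        refine ⟨c⁻¹ • u, M₀.smul_mem _ hu, smul_ne_zero (inv_ne_zero hc) hu0, ?_⟩
        have h1 : c • v - u = c • (v - c⁻¹ • u) := by
          rw [smul_sub, smul_inv_smul₀ hc]
        rw [h1, norm_smul, norm_smul, norm_inv, Real.norm_eq_abs]
        have := norm_ne_zero_iff.mpr hu0
        field_simp
      · rintro ⟨u, hu, hu0, rfl⟩
        refine ⟨c • u, M₀.smul_mem _ hu, smul_ne_zero hc hu0, ?_⟩
        rw [← smul_sub, norm_smul, norm_smul, Real.norm_eq_abs]
        have := norm_ne_zero_iff.mpr hu0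
        field_simp
    rw [Set.mem_setOf_eq] at hv ⊢
    rw [this]; exact hv
  · right
    rw [Set.mem_singleton_iff] at hv ⊢
    rw [hv, smul_zero]

lemma angle_lt {H : Type*} [NormedAddCommGroup H] [InnerProductSpace ℝ H]
    (u v : H) (hu : u ≠ 0) (hv : v ≠ 0) (s : ℝ) (hs : 0 < s) :
    acuteAngle u v < Real.arcsin s ↔
      acuteAngle u v < Real.pi / 2 ∧ ‖u‖ ^ 2 * ‖v‖ ^ 2 - ⟪u, v⟫ ^ 2 < s ^ 2 * (‖u‖ ^ 2 * ‖v‖ ^ 2) := by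
  have hu' := norm_pos_iff.mpr hu
  have hv' := norm_pos_iff.mpr hv
  have h0 : 0 ≤ acuteAngle u v := Real.arccos_nonneg _
  have key : Real.sin (acuteAngle u v) < s ↔
      ‖u‖ ^ 2 * ‖v‖ ^ 2 - ⟪u, v⟫ ^ 2 < s ^ 2 * (‖u‖ ^ 2 * ‖v‖ ^ 2) := by
    unfold acuteAngle
    rw [Real.sin_arccos, Real.sqrt_lt' hs, div_pow, sq_abs, mul_pow,
      ← mul_lt_mul_iff_left₀ (show 0 < ‖u‖ ^ 2 * ‖v‖ ^ 2 by positivity), sub_mul,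
      div_mul_cancel₀ _ (by positivity), one_mul]
  rw [← key]
  have hpi := Real.pi_pos
  constructor
  · intro h
    have h2 := h.trans_le (Real.arcsin_le_pi_div_two s)
    exact ⟨h2, (Real.lt_arcsin_iff_sin_lt' ⟨by linarith, h2⟩).mp h⟩
  · rintro ⟨h1, h2⟩
    exact (Real.lt_arcsin_iff_sin_lt' ⟨by linarith, h1⟩).mpr h2

lemma ratio_lt {H : Type*} [NormedAddCommGroup H] [InnerProductSpace ℝ H]
    (u v : H) (hu : u ≠ 0) (hv : v ≠ 0) (s : ℝ) (hs : 0 < s) :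
    ‖v - u‖ / ‖u‖ < s ↔ ‖v‖ ^ 2 - 2 * ⟪u, v⟫ + ‖u‖ ^ 2 < s ^ 2 * ‖u‖ ^ 2 := by
  have hu' := norm_pos_iff.mpr hu
  rw [div_lt_iff₀ hu', ← sq_lt_sq₀ (norm_nonneg _) (by positivity), norm_sub_sq_real,
    real_inner_comm, mul_pow]

lemma exists_iff {H : Type*} [NormedAddCommGroup H] [InnerProductSpace ℝ H]
    (M : Set H) (hM : ∀ c : ℝ, c ≠ 0 → ∀ u ∈ M, c • u ∈ M) (v : H) (hv : v ≠ 0)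
    (s : ℝ) (hs : 0 < s) (hs1 : s < 1) :
    (∃ u ∈ M, u ≠ 0 ∧ ‖v - u‖ / ‖u‖ < s) ↔
    (∃ u ∈ M, u ≠ 0 ∧ acuteAngle u v < Real.arcsin s) := by
  have hv' := norm_pos_iff.mpr hv
  constructor
  · rintro ⟨u, hu, hu0, h⟩
    refine ⟨u, hu, hu0, ?_⟩
    have hu' := norm_pos_iff.mpr hu0
    rw [ratio_lt u v hu0 hv s hs] at h
    rw [angle_lt u v hu0 hv s hs]
    have hk : 0 < ⟪u, v⟫ := by
      have : s ^ 2 * ‖u‖ ^ 2 < 1 * ‖u‖ ^ 2 :=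
        mul_lt_mul_of_pos_right (by nlinarith) (by positivity)
      nlinarith [sq_nonneg ‖v‖]
    constructor
    · unfold acuteAngle
      rw [Real.arccos_lt_pi_div_two]
      have := abs_pos.mpr hk.ne'
      positivity
    · have := mul_lt_mul_of_pos_right h (show 0 < ‖v‖ ^ 2 by positivity)
      nlinarith [sq_nonneg (‖v‖ ^ 2 - ⟪u, v⟫)]
  · rintro ⟨u, hu, hu0, h⟩
    have hu' := norm_pos_iff.mpr hu0
    rw [angle_lt u v hu0 hv s hs] at h
    obtain ⟨h1, h2⟩ := h
    have hk : ⟪u, v⟫ ≠ 0 := by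
      intro h0
      simp [acuteAngle, h0] at h1
    have hc : ‖v‖ ^ 2 / ⟪u, v⟫ ≠ 0 := div_ne_zero (by positivity) hk
    have hcu := smul_ne_zero hc hu0
    refine ⟨_, hM _ hc u hu, hcu, ?_⟩
    rw [ratio_lt _ v hcu hv s hs, norm_smul, real_inner_smul_left, div_mul_cancel₀ _ hk,
      mul_pow, Real.norm_eq_abs, sq_abs, div_pow]
    have hk2 : 0 < ⟪u, v⟫ ^ 2 := by positivity
    rw [← mul_lt_mul_iff_left₀ hk2]
    have e1 : (‖v‖ ^ 2 - 2 * ‖v‖ ^ 2 + (‖v‖ ^ 2) ^ 2 / ⟪u, v⟫ ^ 2 * ‖u‖ ^ 2) * ⟪u, v⟫ ^ 2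
      = ‖v‖ ^ 2 * (‖u‖ ^ 2 * ‖v‖ ^ 2 - ⟪u, v⟫ ^ 2) := by
      field_simp
      ring
    have e2 : s ^ 2 * ((‖v‖ ^ 2) ^ 2 / ⟪u, v⟫ ^ 2 * ‖u‖ ^ 2) * ⟪u, v⟫ ^ 2
      = ‖v‖ ^ 2 * (s ^ 2 * (‖u‖ ^ 2 * ‖v‖ ^ 2)) := by
      field_simp
    rw [e1, e2]
    exact mul_lt_mul_of_pos_left h2 (by positivity)

lemma main_iff {H : Type*} [NormedAddCommGroup H] [InnerProductSpace ℝ H]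
    (M : Set H) (hM : ∀ c : ℝ, c ≠ 0 → ∀ u ∈ M, c • u ∈ M) (v : H) (hv : v ≠ 0)
    (r : ℝ) (hr : 0 ≤ r ∧ r < 1) :
    sInf {d : ℝ | ∃ u ∈ M, u ≠ 0 ∧ d = ‖v - u‖ / ‖u‖} ≤ r ↔
    sInf {a : ℝ | ∃ u ∈ M, u ≠ 0 ∧ a = acuteAngle u v} ≤ Real.arcsin r := by
  by_cases hne : ∃ u ∈ M, u ≠ 0
  swap
  · have e1 : {d : ℝ | ∃ u ∈ M, u ≠ 0 ∧ d = ‖v - u‖ / ‖u‖} = ∅ := by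
      ext d; constructor
      · rintro ⟨u, h1, h2, -⟩; exact hne ⟨u, h1, h2⟩
      · simp
    have e2 : {a : ℝ | ∃ u ∈ M, u ≠ 0 ∧ a = acuteAngle u v} = ∅ := by
      ext d; constructor
      · rintro ⟨u, h1, h2, -⟩; exact hne ⟨u, h1, h2⟩
      · simp
    rw [e1, e2, Real.sInf_empty]
    simp [hr.1, Real.arcsin_nonneg]
  obtain ⟨u₀, hu₀, hu₀'⟩ := hne
  have b1 : BddBelow {d : ℝ | ∃ u ∈ M, u ≠ 0 ∧ d = ‖v - u‖ / ‖u‖} :=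
    ⟨0, by rintro _ ⟨u, -, -, rfl⟩; positivity⟩
  have b2 : BddBelow {a : ℝ | ∃ u ∈ M, u ≠ 0 ∧ a = acuteAngle u v} :=
    ⟨0, by rintro _ ⟨u, -, -, rfl⟩; exact Real.arccos_nonneg _⟩
  have n1 : {d : ℝ | ∃ u ∈ M, u ≠ 0 ∧ d = ‖v - u‖ / ‖u‖}.Nonempty := ⟨_, u₀, hu₀, hu₀', rfl⟩
  have n2 : {a : ℝ | ∃ u ∈ M, u ≠ 0 ∧ a = acuteAngle u v}.Nonempty := ⟨_, u₀, hu₀, hu₀', rfl⟩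
  have hr1 : Real.sin (Real.arcsin r) = r := Real.sin_arcsin (by linarith) hr.2.le
  have hpi := Real.pi_pos
  have ha0 := Real.arcsin_nonneg.mpr hr.1
  have ha1 : Real.arcsin r < Real.pi / 2 := Real.arcsin_lt_pi_div_two.mpr hr.2
  constructor
  · intro h
    refine le_of_forall_gt_imp_ge_of_dense fun a ha => ?_
    obtain ⟨t, ht1, ht2⟩ := exists_between (lt_min ha ha1)
    have ht3 := ht2.trans_le (min_le_right _ _)
    have ht4 := ht2.trans_le (min_le_left _ _)
    have hs : r < Real.sin t := by
      rw [← hr1]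
      exact Real.sin_lt_sin_of_lt_of_le_pi_div_two (by linarith) ht3.le ht1
    have hs1 : Real.sin t < 1 := by
      rw [← Real.sin_pi_div_two]
      exact Real.sin_lt_sin_of_lt_of_le_pi_div_two (by linarith) le_rfl ht3
    obtain ⟨_, ⟨u, hu, hu0, rfl⟩, hd⟩ := exists_lt_of_csInf_lt n1 (h.trans_lt hs)
    obtain ⟨w, hw, hw0, hwa⟩ :=
      (exists_iff M hM v hv _ (hr.1.trans_lt hs) hs1).mp ⟨u, hu, hu0, hd⟩
    rw [Real.arcsin_sin (by linarith) ht3.le] at hwa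
    exact (csInf_le b2 ⟨w, hw, hw0, rfl⟩).trans (hwa.trans ht4).le
  · intro h
    refine le_of_forall_gt_imp_ge_of_dense fun a ha => ?_
    obtain ⟨s, hs1, hs2⟩ := exists_between (lt_min ha hr.2)
    have hs3 := hs2.trans_le (min_le_right _ _)
    have hs4 := hs2.trans_le (min_le_left _ _)
    have has : Real.arcsin r < Real.arcsin s :=
      Real.arcsin_lt_arcsin (by linarith) hs1 hs3.le
    obtain ⟨_, ⟨u, hu, hu0, rfl⟩, hd⟩ := exists_lt_of_csInf_lt n2 (h.trans_lt has)
    obtain ⟨w, hw, hw0, hwa⟩ :=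
      (exists_iff M hM v hv _ (hr.1.trans_lt hs1) hs3).mpr ⟨u, hu, hu0, hd⟩
    exact (csInf_le b1 ⟨w, hw, hw0, rfl⟩).trans (hwa.trans hs4).le

theorem stmt2 {H : Type*} [NormedAddCommGroup H] [InnerProductSpace ℝ H] [CompleteSpace H]
    (M₀ : Submodule ℝ H) (hclosed : IsClosed (M₀ : Set H))
    (r₀ r : ℝ) (hr₀ : 0 ≤ r₀ ∧ r₀ < 1) (hr : 0 ≤ r ∧ r < 1)
    (M : Set H) (hM : M = coneNbhd (M₀ : Set H) r₀) :
    coneNbhd M r =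
      {v : H | v ≠ 0 ∧
        sInf {a : ℝ | ∃ u ∈ M, u ≠ 0 ∧ a = acuteAngle u v} ≤ Real.arcsin r} ∪ {0} := by
  have hMs : ∀ c : ℝ, c ≠ 0 → ∀ u ∈ M, c • u ∈ M := by
    subst hM
    exact fun c hc u hu => cone_smul M₀ r₀ c hc u hu
  ext v
  by_cases hv : v = 0
  · simp [coneNbhd, hv]
  · have := main_iff M hMs v hv r hr
    simp only [coneNbhd, Set.mem_union, Set.mem_setOf_eq, Set.mem_singleton_iff, hv, or_false,
      ne_eq, not_false_eq_true, true_and]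
    exact this
end

section
/- Let H be a real Hilbert space, M₀ ⊆ H a closed linear subspace, r₀, r ∈ [0,1), and set M := S(M₀, r₀). Then the conelike neighborhood and the inverse conelike neighborhood of M coincide: S(M, r) = S̃(M, r). -/
/-- The inverse conelike neighborhood `S̃(M, r)`:
all `v` with `inf_{u ∈ M} ‖v - u‖ ≤ r ‖v‖`. -/
noncomputable def invConeNbhd {H : Type*} [NormedAddCommGroup H] [InnerProductSpace ℝ H]
    (M : Set H) (r : ℝ) : Set H :=
  {v | sInf {d : ℝ | ∃ u ∈ M, d = ‖v - u‖} ≤ r * ‖v‖}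

lemma cone_scale {H : Type*} [NormedAddCommGroup H] [InnerProductSpace ℝ H]
    {v u : H} {r : ℝ} (hr0 : 0 ≤ r) (hr1 : r < 1) (hv : v ≠ 0) (h : ‖v - u‖ ≤ r * ‖v‖) :
    ∃ t : ℝ, 0 < t ∧ ‖v - t • u‖ ≤ r * ‖t • u‖ := by
  have ha : 0 < ‖v‖ := norm_pos_iff.2 hv
  have h2 : ‖v - u‖ ^ 2 ≤ (r * ‖v‖) ^ 2 := pow_le_pow_left₀ (norm_nonneg _) h 2
  rw [norm_sub_sq_real] at h2
  have hr2 : 0 < 1 - r ^ 2 := by nlinarith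
  set p := inner ℝ v u with hp
  have hpp : 0 < p := by
    have : 0 < (1 - r ^ 2) * ‖v‖ ^ 2 := by positivity
    nlinarith [sq_nonneg ‖u‖]
  have key : (1 - r ^ 2) * ‖v‖ ^ 2 * ‖u‖ ^ 2 ≤ p ^ 2 := by
    have h3 : (1 - r ^ 2) * ‖v‖ ^ 2 + ‖u‖ ^ 2 ≤ 2 * p := by linarith
    have h4 : ((1 - r ^ 2) * ‖v‖ ^ 2 + ‖u‖ ^ 2) ^ 2 ≤ (2 * p) ^ 2 :=
      pow_le_pow_left₀ (by positivity) h3 2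
    nlinarith [sq_nonneg ((1 - r ^ 2) * ‖v‖ ^ 2 - ‖u‖ ^ 2)]
  have ht : 0 < ‖v‖ ^ 2 / p := by positivity
  refine ⟨‖v‖ ^ 2 / p, ht, ?_⟩
  refine (sq_le_sq₀ (norm_nonneg _) (by positivity)).1 ?_
  rw [norm_sub_sq_real, inner_smul_right, ← hp, norm_smul, Real.norm_of_nonneg ht.le]
  have e : ‖v‖ ^ 2 / p * p = ‖v‖ ^ 2 := by field_simp
  rw [e]
  have : (1 - r ^ 2) * (‖v‖ ^ 2 / p * ‖u‖) ^ 2 ≤ ‖v‖ ^ 2 := by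
    have e2 : (1 - r ^ 2) * (‖v‖ ^ 2 / p * ‖u‖) ^ 2
        = ‖v‖ ^ 2 * ((1 - r ^ 2) * ‖v‖ ^ 2 * ‖u‖ ^ 2) / p ^ 2 := by field_simp
    rw [e2, div_le_iff₀ (by positivity)]
    exact mul_le_mul_of_nonneg_left key (by positivity)
  nlinarith

lemma cone_eq_of_conical {H : Type*} [NormedAddCommGroup H] [InnerProductSpace ℝ H]
    (M : Set H) (r : ℝ) (hr : 0 ≤ r ∧ r < 1) (h0 : (0 : H) ∈ M)
    (hne : ∀ v : H, v ≠ 0 → ∃ u ∈ M, u ≠ 0)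
    (hc : ∀ v ∈ M, ∀ t : ℝ, 0 < t → t • v ∈ M) :
    coneNbhd M r = invConeNbhd M r := by
  have bd1 : ∀ v : H, BddBelow {d : ℝ | ∃ u ∈ M, u ≠ 0 ∧ d = ‖v - u‖ / ‖u‖} := fun v =>
    ⟨0, by rintro d ⟨u, -, -, rfl⟩; positivity⟩
  have bd2 : ∀ v : H, BddBelow {d : ℝ | ∃ u ∈ M, d = ‖v - u‖} := fun v =>
    ⟨0, by rintro d ⟨u, -, rfl⟩; positivity⟩
  ext v
  by_cases hv : v = 0
  · subst hv
    refine ⟨fun _ => ?_, fun _ => Or.inr rfl⟩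
    simp only [invConeNbhd, Set.mem_ofPred_eq]
    exact (csInf_le (bd2 0) ⟨0, h0, rfl⟩).trans (by simp)
  have hvp : 0 < ‖v‖ := norm_pos_iff.2 hv
  constructor
  · rintro (h | h)
    swap
    · exact absurd h hv
    simp only [invConeNbhd, Set.mem_ofPred_eq] at h
    simp only [invConeNbhd, Set.mem_ofPred_eq]
    rw [← div_le_iff₀ hvp]
    refine le_of_forall_gt_imp_ge_of_dense fun s hs => ?_
    rw [div_le_iff₀ hvp]
    obtain ⟨w, hw, hw0⟩ := hne v hv
    have hs' : r < min s ((r + 1) / 2) := lt_min hs (by linarith)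
    obtain ⟨d, ⟨u, hu, hu0, rfl⟩, hd⟩ := exists_lt_of_csInf_lt (by exact ⟨_, w, hw, hw0, rfl⟩)
      (h.trans_lt hs')
    have hup : 0 < ‖u‖ := norm_pos_iff.2 hu0
    rw [div_lt_iff₀ hup] at hd
    have hs1 : min s ((r + 1) / 2) < 1 := (min_le_right _ _).trans_lt (by linarith)
    obtain ⟨t, ht, h2⟩ := cone_scale (u := v) (hr.1.trans hs'.le) hs1 hu0
      (by rw [norm_sub_rev]; exact hd.le)
    refine (csInf_le (bd2 v) ⟨t⁻¹ • u, hc u hu _ (inv_pos.2 ht), rfl⟩).trans ?_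
    have e : u - t • v = -(t • (v - t⁻¹ • u)) := by
      rw [smul_sub, smul_inv_smul₀ ht.ne']; abel
    rw [e, norm_neg, norm_smul, norm_smul, Real.norm_of_nonneg ht.le] at h2
    have h3 : ‖v - t⁻¹ • u‖ ≤ min s ((r + 1) / 2) * ‖v‖ := by
      refine le_of_mul_le_mul_left ?_ ht
      linarith
    exact h3.trans (mul_le_mul_of_nonneg_right (min_le_left _ _) hvp.le)
  · intro h
    left
    simp only [invConeNbhd, Set.mem_ofPred_eq] at h
    simp only [invConeNbhd, Set.mem_ofPred_eq]
    refine le_of_forall_gt_imp_ge_of_dense fun s hs => ?_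
    have hs' : r < min s ((r + 1) / 2) := lt_min hs (by linarith)
    have hs1 : min s ((r + 1) / 2) < 1 := (min_le_right _ _).trans_lt (by linarith)
    obtain ⟨d, ⟨u, hu, rfl⟩, hd⟩ := exists_lt_of_csInf_lt (by exact ⟨_, 0, h0, rfl⟩)
      (h.trans_lt (mul_lt_mul_of_pos_right hs' hvp))
    have hu0 : u ≠ 0 := by
      rintro rfl
      rw [sub_zero] at hd
      nlinarith
    obtain ⟨t, ht, h2⟩ := cone_scale (hr.1.trans hs'.le) hs1 hv hd.le
    have htu : t • u ≠ 0 := smul_ne_zero ht.ne' hu0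
    refine (csInf_le (bd1 v) ⟨t • u, hc u hu _ ht, htu, rfl⟩).trans ?_
    rw [div_le_iff₀ (norm_pos_iff.2 htu)]
    exact h2.trans (mul_le_mul_of_nonneg_right (min_le_left _ _) (norm_nonneg _))

theorem stmt3 {H : Type*} [NormedAddCommGroup H] [InnerProductSpace ℝ H] [CompleteSpace H]
    (M₀ : Submodule ℝ H) (hclosed : IsClosed (M₀ : Set H))
    (r₀ r : ℝ) (hr₀ : 0 ≤ r₀ ∧ r₀ < 1) (hr : 0 ≤ r ∧ r < 1)
    (M : Set H) (hM : M = coneNbhd (M₀ : Set H) r₀) :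
    coneNbhd M r = invConeNbhd M r := by
  subst hM
  have bd1 : ∀ v : H, BddBelow {d : ℝ | ∃ u ∈ (M₀ : Set H), u ≠ 0 ∧ d = ‖v - u‖ / ‖u‖} :=
    fun v => ⟨0, by rintro d ⟨u, -, -, rfl⟩; positivity⟩
  refine cone_eq_of_conical _ r hr (Or.inr rfl) ?_ ?_
  · intro v hv
    by_cases hne : ∃ u ∈ (M₀ : Set H), u ≠ 0
    · obtain ⟨u, hu, hu0⟩ := hne
      refine ⟨u, Or.inl ?_, hu0⟩
      simp only [invConeNbhd, Set.mem_ofPred_eq]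
      exact (csInf_le (bd1 u) ⟨u, hu, hu0, rfl⟩).trans (by simpa using hr₀.1)
    · refine ⟨v, Or.inl ?_, hv⟩
      simp only [invConeNbhd, Set.mem_ofPred_eq]
      have : {d : ℝ | ∃ u ∈ (M₀ : Set H), u ≠ 0 ∧ d = ‖v - u‖ / ‖u‖} = ∅ := by
        ext d
        simp only [Set.mem_ofPred_eq, Set.mem_empty_iff_false, iff_false]
        rintro ⟨u, hu, hu0, -⟩
        exact hne ⟨u, hu, hu0⟩
      rw [this, Real.sInf_empty]
      exact hr₀.1
  · rintro v (hv | hv) t ht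
    · left
      simp only [invConeNbhd, Set.mem_ofPred_eq] at hv
      simp only [invConeNbhd, Set.mem_ofPred_eq]
      convert hv using 2
      ext d
      constructor
      · rintro ⟨u, hu, hu0, rfl⟩
        refine ⟨t⁻¹ • u, M₀.smul_mem _ hu, smul_ne_zero (inv_ne_zero ht.ne') hu0, ?_⟩
        have e : t • v - u = t • (v - t⁻¹ • u) := by
          rw [smul_sub, smul_inv_smul₀ ht.ne']
        rw [e, norm_smul, norm_smul, Real.norm_of_nonneg ht.le,
          Real.norm_of_nonneg (inv_pos.2 ht).le]
        have := norm_pos_iff.2 hu0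
        field_simp
      · rintro ⟨u, hu, hu0, rfl⟩
        refine ⟨t • u, M₀.smul_mem _ hu, smul_ne_zero ht.ne' hu0, ?_⟩
        rw [← smul_sub, norm_smul, norm_smul, Real.norm_of_nonneg ht.le]
        have := norm_pos_iff.2 hu0
        field_simp
    · right
      rw [Set.mem_singleton_iff] at hv ⊢
      rw [hv, smul_zero]
end

section
/- Let H be a real Hilbert space, M₀ ⊆ H a closed linear subspace, and r₁, …, r_k ∈ [0,1) with Σ_{j=1}^k arcsin r_j ≤ π/2. Define recursively M_j := S(M_{j-1}, r_j) for j = 1, …, k. Then M_k ⊆ S(M₀, sin(Σ_{j=1}^k arcsin r_j)). -/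
open InnerProductGeometry in
/-- One step with an explicit witness. -/
lemma cone_step {H : Type*} [NormedAddCommGroup H] [InnerProductSpace ℝ H]
    (K : Submodule ℝ H) [K.HasOrthogonalProjection] (α ρ : ℝ) (hα : 0 ≤ α) (hα2 : α ≤ Real.pi / 2)
    (hρ : 0 ≤ ρ) (hρ1 : ρ < 1) (u v : H) (hu : u ≠ 0)
    (h1 : Real.cos α * ‖u‖ ≤ ‖K.starProjection u‖) (h2 : ‖v - u‖ ≤ ρ * ‖u‖) :
    Real.cos (α + Real.arcsin ρ) * ‖v‖ ≤ ‖K.starProjection v‖ := by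
  have hβ0 : 0 ≤ Real.arcsin ρ := Real.arcsin_nonneg.2 hρ
  have hβ1 : Real.arcsin ρ ≤ Real.pi / 2 := Real.arcsin_le_pi_div_two ρ
  have hpi := Real.pi_pos
  have hun : 0 < ‖u‖ := norm_pos_iff.2 hu
  rcases lt_or_ge (Real.pi / 2) (α + Real.arcsin ρ) with hbig | hsmall
  · have : Real.cos (α + Real.arcsin ρ) ≤ 0 :=
      Real.cos_nonpos_of_pi_div_two_le_of_le hbig.le (by linarith)
    exact (mul_nonpos_of_nonpos_of_nonneg this (norm_nonneg _)).trans (norm_nonneg _)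
  by_cases hv : v = 0
  · simp [hv]
  have hvn : 0 < ‖v‖ := norm_pos_iff.2 hv
  by_cases hp : K.starProjection u = 0
  · have hc : Real.cos α ≤ 0 := by
      rw [hp, norm_zero] at h1
      by_contra! hc
      nlinarith [mul_pos hc hun]
    have hα' : Real.pi / 2 ≤ α := by
      by_contra! hh
      exact absurd (Real.cos_pos_of_mem_Ioo ⟨by linarith, hh⟩) (not_lt.2 hc)
    have : Real.cos (α + Real.arcsin ρ) ≤ 0 :=
      Real.cos_nonpos_of_pi_div_two_le_of_le (by linarith) (by linarith)
    exact (mul_nonpos_of_nonpos_of_nonneg this (norm_nonneg _)).trans (norm_nonneg _)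
  have hpn : 0 < ‖K.starProjection u‖ := norm_pos_iff.2 hp
  have hip : ∀ w : H, inner ℝ w (K.starProjection u)
      = inner ℝ (K.starProjection w) (K.starProjection u) := by
    intro w
    rw [← K.inner_starProjection_left_eq_right (K.starProjection w) u,
      ← K.inner_starProjection_left_eq_right w u,
      K.starProjection_eq_self_iff.2 (K.starProjection_apply_mem w)]
  have a1 : angle (K.starProjection u) u ≤ α := by
    rw [angle_comm]
    by_contra! hh
    have := Real.cos_lt_cos_of_nonneg_of_le_pi hα (angle_le_pi _ _) hh
    rw [cos_angle, hip, real_inner_self_eq_norm_sq, div_lt_iff₀ (by positivity)] at this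
    nlinarith
  have a2 : angle u v ≤ Real.arcsin ρ := by
    by_contra! hh
    have := Real.cos_lt_cos_of_nonneg_of_le_pi hβ0 (angle_le_pi _ _) hh
    rw [cos_angle, Real.cos_arcsin, div_lt_iff₀ (by positivity)] at this
    have hs : Real.sqrt (1 - ρ ^ 2) ^ 2 = 1 - ρ ^ 2 := Real.sq_sqrt (by nlinarith)
    have hsq : ‖v - u‖ ^ 2 ≤ (ρ * ‖u‖) ^ 2 := by gcongr
    rw [norm_sub_sq_real, real_inner_comm] at hsq
    nlinarith [sq_nonneg (‖v‖ - Real.sqrt (1 - ρ ^ 2) * ‖u‖)]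
  have a3 : angle (K.starProjection u) v ≤ α + Real.arcsin ρ :=
    (angle_le_angle_add_angle _ u _).trans (add_le_add a1 a2)
  have a4 := Real.cos_le_cos_of_nonneg_of_le_pi (angle_nonneg _ _) (by linarith) a3
  rw [angle_comm, cos_angle, hip, le_div_iff₀ (by positivity)] at a4
  have a5 := a4.trans (real_inner_le_norm _ _)
  rw [← mul_assoc] at a5
  exact le_of_mul_le_mul_right a5 hpn

lemma cone_bdd {H : Type*} [NormedAddCommGroup H] [InnerProductSpace ℝ H] (M : Set H) (v : H) :
    BddBelow {d : ℝ | ∃ u ∈ M, u ≠ 0 ∧ d = ‖v - u‖ / ‖u‖} :=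
  ⟨0, by rintro d ⟨u, -, -, rfl⟩; positivity⟩

lemma subset_cone {H : Type*} [NormedAddCommGroup H] [InnerProductSpace ℝ H] (M : Set H) (r : ℝ)
    (hr : 0 ≤ r) : M ⊆ coneNbhd M r := by
  intro v hv
  by_cases h0 : v = 0
  · exact Or.inr h0
  · exact Or.inl ((csInf_le (cone_bdd M v) ⟨v, hv, h0, by simp⟩).trans hr)

lemma cone_step_lim {H : Type*} [NormedAddCommGroup H] [InnerProductSpace ℝ H]
    (K : Submodule ℝ H) [K.HasOrthogonalProjection] (M : Set H)
    (α r : ℝ) (hα : 0 ≤ α) (hα2 : α ≤ Real.pi / 2)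
    (hr : 0 ≤ r) (hr1 : r < 1) (hne : ∃ u ∈ M, u ≠ 0)
    (h1 : ∀ u ∈ M, Real.cos α * ‖u‖ ≤ ‖K.starProjection u‖) (v : H) (hv : v ∈ coneNbhd M r) :
    Real.cos (α + Real.arcsin r) * ‖v‖ ≤ ‖K.starProjection v‖ := by
  rcases hv with hv | hv
  swap
  · rw [Set.mem_singleton_iff] at hv
    simp [hv]
  have hc : Continuous fun ρ : ℝ => Real.cos (α + Real.arcsin ρ) * ‖v‖ := by
    have := Real.continuous_arcsin
    fun_prop
  have ht : Filter.Tendsto (fun ρ : ℝ => Real.cos (α + Real.arcsin ρ) * ‖v‖)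
      (nhdsWithin r (Set.Ioi r)) (nhds (Real.cos (α + Real.arcsin r) * ‖v‖)) :=
    (hc.tendsto r).mono_left nhdsWithin_le_nhds
  refine le_of_tendsto ht ?_
  filter_upwards [Ioo_mem_nhdsGT hr1] with ρ hρ
  obtain ⟨u0, hu0, hu0'⟩ := hne
  obtain ⟨d, ⟨u, hu, hu', rfl⟩, hd⟩ := exists_lt_of_csInf_lt
    (s := {d : ℝ | ∃ u ∈ M, u ≠ 0 ∧ d = ‖v - u‖ / ‖u‖}) ⟨_, u0, hu0, hu0', rfl⟩
    (lt_of_le_of_lt hv hρ.1)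
  rw [div_lt_iff₀ (norm_pos_iff.2 hu')] at hd
  exact cone_step K α ρ hα hα2 (hr.trans hρ.1.le) hρ.2 u v hu' (h1 u hu) hd.le

lemma cone_iter {H : Type*} [NormedAddCommGroup H] [InnerProductSpace ℝ H]
    (K : Submodule ℝ H) [K.HasOrthogonalProjection] (hne : ∃ u ∈ (K : Set H), u ≠ 0) (k : ℕ) :
    ∀ (r : Fin k → ℝ) (_ : ∀ j, 0 ≤ r j ∧ r j < 1)
    (_ : ∑ j, Real.arcsin (r j) ≤ Real.pi / 2)
    (M : Fin (k + 1) → Set H) (_ : M 0 = (K : Set H))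
    (_ : ∀ j : Fin k, M j.succ = coneNbhd (M j.castSucc) (r j)),
    (K : Set H) ⊆ M (Fin.last k) ∧ ∀ v ∈ M (Fin.last k),
      Real.cos (∑ j, Real.arcsin (r j)) * ‖v‖ ≤ ‖K.starProjection v‖ := by
  induction k with
  | zero =>
    intro r _ _ M h0 _
    have : M (Fin.last 0) = (K : Set H) := h0
    rw [this]
    refine ⟨subset_rfl, fun v hv => ?_⟩
    rw [K.starProjection_eq_self_iff.2 hv]
    simp
  | succ k ih =>
    intro r hr hsum M h0 hrec
    rw [Fin.sum_univ_castSucc] at hsum ⊢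
    have hl : 0 ≤ Real.arcsin (r (Fin.last k)) := Real.arcsin_nonneg.2 (hr _).1
    obtain ⟨i1, i2⟩ := ih (fun j => r j.castSucc) (fun j => hr _) (by linarith)
      (fun j => M j.castSucc) h0 (fun j => hrec j.castSucc)
    have hM : M (Fin.last (k + 1)) = coneNbhd (M (Fin.last k).castSucc) (r (Fin.last k)) :=
      hrec (Fin.last k)
    rw [hM]
    refine ⟨i1.trans (subset_cone _ _ (hr _).1), fun v hv => ?_⟩
    obtain ⟨u, hu, hu'⟩ := hne
    exact cone_step_lim K _ _ _ (Finset.sum_nonneg fun j _ => Real.arcsin_nonneg.2 (hr _).1)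
      (by linarith) (hr _).1 (hr _).2 ⟨u, i1 hu, hu'⟩ i2 v hv

lemma cone_final {H : Type*} [NormedAddCommGroup H] [InnerProductSpace ℝ H]
    (K : Submodule ℝ H) [K.HasOrthogonalProjection] (hne : ∃ u ∈ (K : Set H), u ≠ 0)
    (α : ℝ) (hα : 0 ≤ α) (hα2 : α ≤ Real.pi / 2) (v : H)
    (h : Real.cos α * ‖v‖ ≤ ‖K.starProjection v‖) : v ∈ coneNbhd (K : Set H) (Real.sin α) := by
  by_cases hv : v = 0
  · exact Or.inr hv
  left
  have hpi := Real.pi_pos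
  have hvn : 0 < ‖v‖ := norm_pos_iff.2 hv
  have hs0 : 0 ≤ Real.sin α := Real.sin_nonneg_of_nonneg_of_le_pi hα (by linarith)
  have hc0 : 0 ≤ Real.cos α := Real.cos_nonneg_of_mem_Icc ⟨by linarith, hα2⟩
  have hsc := Real.sin_sq_add_cos_sq α
  by_cases hp : K.starProjection v = 0
  · have hc : Real.cos α = 0 := by
      rw [hp, norm_zero] at h
      by_contra hc
      have := mul_pos (lt_of_le_of_ne hc0 (Ne.symm hc)) hvn
      linarith
    have hs : Real.sin α = 1 := by rw [hc] at hsc; nlinarith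
    rw [Set.mem_setOf_eq, hs]
    refine le_of_forall_pos_le_add fun ε hε => ?_
    obtain ⟨u, hu, hu'⟩ := hne
    have hun : 0 < ‖u‖ := norm_pos_iff.2 hu'
    set t : ℝ := ‖v‖ / (ε * ‖u‖) with ht
    have htp : 0 < t := by positivity
    have hn : ‖t • u‖ = ‖v‖ / ε := by
      rw [norm_smul, Real.norm_of_nonneg htp.le, ht]; field_simp
    refine (csInf_le (cone_bdd _ v) ⟨t • u, K.smul_mem t hu, smul_ne_zero htp.ne' hu', rfl⟩).trans ?_
    rw [hn, div_le_iff₀ (by positivity)]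
    calc ‖v - t • u‖ ≤ ‖v‖ + ‖t • u‖ := norm_sub_le _ _
      _ = (1 + ε) * (‖v‖ / ε) := by rw [hn]; field_simp; ring
  · have hpn : 0 < ‖K.starProjection v‖ := norm_pos_iff.2 hp
    have hip : inner ℝ v (K.starProjection v) = ‖K.starProjection v‖ ^ 2 := by
      rw [← real_inner_self_eq_norm_sq,
        ← K.inner_starProjection_left_eq_right (K.starProjection v) v,
        K.starProjection_eq_self_iff.2 (K.starProjection_apply_mem v), real_inner_comm]
    have hm := K.starProjection_apply_mem v
    generalize K.starProjection v = p at *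
    set t : ℝ := ‖v‖ ^ 2 / ‖p‖ ^ 2 with ht
    have htp : 0 < t := by positivity
    have htt : t * ‖p‖ ^ 2 = ‖v‖ ^ 2 := by rw [ht]; field_simp
    have hn : ‖t • p‖ = t * ‖p‖ := by
      rw [norm_smul, Real.norm_of_nonneg htp.le]
    refine (csInf_le (cone_bdd _ v) ⟨t • p, K.smul_mem t hm, smul_ne_zero htp.ne' hp, rfl⟩).trans ?_
    rw [hn, div_le_iff₀ (by positivity)]
    refine le_of_sq_le_sq ?_ (by positivity)
    rw [norm_sub_sq_real, inner_smul_right, hip, hn, htt]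
    have h2 : (Real.cos α * ‖v‖) ^ 2 ≤ ‖p‖ ^ 2 := by gcongr
    have h3 : (t * ‖p‖) ^ 2 = t * ‖v‖ ^ 2 := by rw [← htt]; ring
    have h4 : (Real.sin α * (t * ‖p‖)) ^ 2 = (1 - Real.cos α ^ 2) * (t * ‖v‖ ^ 2) := by
      rw [mul_pow, h3, ← hsc]; ring
    rw [h4, h3]
    nlinarith [mul_le_mul_of_nonneg_left h2 htp.le]

theorem stmt4 {H : Type*} [NormedAddCommGroup H] [InnerProductSpace ℝ H] [CompleteSpace H]
    (M₀ : Submodule ℝ H) (hclosed : IsClosed (M₀ : Set H))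
    (k : ℕ) (r : Fin k → ℝ) (hr : ∀ j, 0 ≤ r j ∧ r j < 1)
    (hsum : ∑ j, Real.arcsin (r j) ≤ Real.pi / 2)
    (M : Fin (k + 1) → Set H) (hM0 : M 0 = (M₀ : Set H))
    (hMrec : ∀ j : Fin k, M j.succ = coneNbhd (M j.castSucc) (r j)) :
    M (Fin.last k) ⊆ coneNbhd (M₀ : Set H) (Real.sin (∑ j, Real.arcsin (r j))) := by
  have hS0 : 0 ≤ ∑ j, Real.arcsin (r j) :=
    Finset.sum_nonneg fun j _ => Real.arcsin_nonneg.2 (hr j).1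
  by_cases hne : ∃ u ∈ (M₀ : Set H), u ≠ 0
  · have : CompleteSpace M₀ := hclosed.completeSpace_coe
    intro v hv
    exact cone_final M₀ hne _ hS0 hsum v ((cone_iter M₀ hne k r hr hsum M hM0 hMrec).2 v hv)
  · intro v _
    left
    have he : {d : ℝ | ∃ u ∈ (M₀ : Set H), u ≠ 0 ∧ d = ‖v - u‖ / ‖u‖} = ∅ := by
      ext d
      simp only [Set.mem_setOf_eq, Set.mem_empty_iff_false, iff_false]
      rintro ⟨u, hu, hu', -⟩
      exact hne ⟨u, hu, hu'⟩
    rw [Set.mem_setOf_eq, he, Real.sInf_empty]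
    exact Real.sin_nonneg_of_nonneg_of_le_pi hS0 (by linarith [Real.pi_pos])
end

section
/- Let H be a real inner product space and let x, y, z ∈ H be nonzero vectors. Then the acute angle satisfies the triangle inequality θ(x,y) ≤ θ(x,z) + θ(z,y). -/
open RealInnerProductSpace

theorem acuteAngle_le_angle {H : Type*} [NormedAddCommGroup H] [InnerProductSpace ℝ H]
    (x y : H) : acuteAngle x y ≤ InnerProductGeometry.angle x y := by
  unfold acuteAngle InnerProductGeometry.angle
  apply Real.arccos_le_arccos
  gcongr
  exact le_abs_self _

theorem acuteAngle_eq_angle {H : Type*} [NormedAddCommGroup H] [InnerProductSpace ℝ H]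
    (x y : H) (h : 0 ≤ ⟪x, y⟫) : acuteAngle x y = InnerProductGeometry.angle x y := by
  unfold acuteAngle InnerProductGeometry.angle
  rw [abs_of_nonneg h]

theorem acuteAngle_neg_left' {H : Type*} [NormedAddCommGroup H] [InnerProductSpace ℝ H]
    (x y : H) : acuteAngle (-x) y = acuteAngle x y := by
  simp [acuteAngle]

theorem acuteAngle_neg_right' {H : Type*} [NormedAddCommGroup H] [InnerProductSpace ℝ H]
    (x y : H) : acuteAngle x (-y) = acuteAngle x y := by
  simp [acuteAngle]

theorem acuteAngle_triangle_aux {H : Type*} [NormedAddCommGroup H] [InnerProductSpace ℝ H]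
    (x y z : H) (h : 0 ≤ ⟪x, z⟫) (h2 : 0 ≤ ⟪z, y⟫) :
    acuteAngle x y ≤ acuteAngle x z + acuteAngle z y := by
  rw [acuteAngle_eq_angle x z h, acuteAngle_eq_angle z y h2]
  exact (acuteAngle_le_angle x y).trans (InnerProductGeometry.angle_le_angle_add_angle x z y)

theorem stmt5 {H : Type*} [NormedAddCommGroup H] [InnerProductSpace ℝ H]
    (x y z : H) (hx : x ≠ 0) (hy : y ≠ 0) (hz : z ≠ 0) :
    acuteAngle x y ≤ acuteAngle x z + acuteAngle z y := by
  rcases le_total 0 ⟪x, z⟫ with h | h <;> rcases le_total 0 ⟪z, y⟫ with h2 | h2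
  · exact acuteAngle_triangle_aux x y z h h2
  · simpa only [acuteAngle_neg_left', acuteAngle_neg_right'] using
      acuteAngle_triangle_aux x (-y) z h (by simpa using h2)
  · simpa only [acuteAngle_neg_left', acuteAngle_neg_right'] using
      acuteAngle_triangle_aux (-x) y z (by simpa using h) h2
  · simpa only [acuteAngle_neg_left', acuteAngle_neg_right'] using
      acuteAngle_triangle_aux (-x) (-y) z (by simpa using h) (by simpa using h2)
end

section
/- Let H be a real inner product space and let u, v ∈ H be nonzero vectors. Setting w := u + v, one has |⟨u, v⟩| / (‖u‖·‖v‖) ≥ (‖u‖ − ‖w‖) / (‖u‖ + ‖w‖). Consequently, if (w_k = u_k + v_k) is a sequence with u_k, v_k nonzero and ‖w_k‖/‖u_k‖ → 0, then cos θ(u_k, v_k) → 1. -/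
open RealInnerProductSpace

theorem stmt9_aux {H : Type*} [NormedAddCommGroup H] [InnerProductSpace ℝ H]
    (u v : H) (hu : u ≠ 0) (hv : v ≠ 0) :
    (‖u‖ - ‖u + v‖) / (‖u‖ + ‖u + v‖) ≤ |⟪u, v⟫| / (‖u‖ * ‖v‖) := by
  have ha : 0 < ‖u‖ := norm_pos_iff.mpr hu
  have hb : 0 < ‖v‖ := norm_pos_iff.mpr hv
  have hw : 0 ≤ ‖u + v‖ := norm_nonneg _
  have h1 : ⟪u, u + v⟫ = ‖u‖ ^ 2 + ⟪u, v⟫ := by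
    rw [inner_add_right, real_inner_self_eq_norm_sq]
  have h2 : ⟪u, u + v⟫ ≤ ‖u‖ * ‖u + v‖ := real_inner_le_norm _ _
  have h3 : -⟪u, v⟫ ≤ |⟪u, v⟫| := neg_le_abs _
  have h4 : ‖v‖ ≤ ‖u‖ + ‖u + v‖ := by
    have h := norm_sub_le (u + v) u
    rw [add_sub_cancel_left] at h
    linarith
  rcases le_total ‖u‖ ‖u + v‖ with h | h
  · exact (div_nonpos_of_nonpos_of_nonneg (by linarith) (by positivity)).trans (by positivity)
  · rw [div_le_div_iff₀ (by positivity) (by positivity)]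
    have h5 : ‖u‖ * (‖u‖ - ‖u + v‖) ≤ |⟪u, v⟫| := by nlinarith
    calc (‖u‖ - ‖u + v‖) * (‖u‖ * ‖v‖) = (‖u‖ * (‖u‖ - ‖u + v‖)) * ‖v‖ := by ring
      _ ≤ |⟪u, v⟫| * (‖u‖ + ‖u + v‖) := mul_le_mul h5 h4 hb.le (abs_nonneg _)

theorem stmt9 {H : Type*} [NormedAddCommGroup H] [InnerProductSpace ℝ H] :
    (∀ u v : H, u ≠ 0 → v ≠ 0 →
      (‖u‖ - ‖u + v‖) / (‖u‖ + ‖u + v‖) ≤ |⟪u, v⟫| / (‖u‖ * ‖v‖)) ∧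
    ∀ u v : ℕ → H, (∀ k, u k ≠ 0) → (∀ k, v k ≠ 0) →
      Filter.Tendsto (fun k => ‖u k + v k‖ / ‖u k‖) Filter.atTop (nhds 0) →
      Filter.Tendsto (fun k => Real.cos (acuteAngle (u k) (v k))) Filter.atTop (nhds 1) := by
  refine ⟨stmt9_aux, fun u v hu hv h => ?_⟩
  have hc : ∀ k, |⟪u k, v k⟫| / (‖u k‖ * ‖v k‖) ≤ 1 := fun k =>
    div_le_one_of_le₀ (abs_real_inner_le_norm _ _) (by positivity)
  have hcos : ∀ k, Real.cos (acuteAngle (u k) (v k)) = |⟪u k, v k⟫| / (‖u k‖ * ‖v k‖) := by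
    intro k
    have h0 : 0 ≤ |⟪u k, v k⟫| / (‖u k‖ * ‖v k‖) := by positivity
    exact Real.cos_arccos (by linarith) (hc k)
  simp only [hcos]
  have hl : Filter.Tendsto (fun k => (1 - ‖u k + v k‖ / ‖u k‖) / (1 + ‖u k + v k‖ / ‖u k‖))
      Filter.atTop (nhds 1) := by
    have := (h.const_sub 1).div (h.const_add 1) (by norm_num)
    rw [sub_zero, add_zero, div_one] at this
    exact this
  refine tendsto_of_tendsto_of_tendsto_of_le_of_le hl tendsto_const_nhds (fun k => ?_) hc
  have ha : 0 < ‖u k‖ := norm_pos_iff.mpr (hu k)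
  have hw : 0 ≤ ‖u k + v k‖ := norm_nonneg _
  refine le_trans (le_of_eq ?_) (stmt9_aux (u k) (v k) (hu k) (hv k))
  show (1 - ‖u k + v k‖ / ‖u k‖) / (1 + ‖u k + v k‖ / ‖u k‖) = _
  field_simp
end

section
/- Let H be a real Hilbert space, M ⊆ H a closed linear subspace, r_p, r₁, …, r_k ∈ [0,1) with arcsin r_p + Σ_{j=1}^k arcsin r_j ≤ π/2, and let G ⊆ S(M, r_p) be any subset. For each j = 1, …, k let Δ_j : H → H be a map satisfying ‖Δ_j u‖ ≤ r_j ‖u‖ for all u ∈ H. Then every element of the image set (I + Δ_k) ∘ ⋯ ∘ (I + Δ_1)(G) belongs to S(M, sin(arcsin r_p + Σ_{j=1}^k arcsin r_j)), where I denotes the identity map on H. -/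
/-- The composition `(I + Δ_k) ∘ ⋯ ∘ (I + Δ_1)`, where `I` is the identity map. -/
def chain {H : Type*} [AddCommGroup H] : (k : ℕ) → (Fin k → H → H) → H → H
  | 0, _ => id
  | k + 1, Δ => (fun x => x + Δ (Fin.last k) x) ∘ chain k (fun j => Δ j.castSucc)

lemma le_of_sq_le_sq_aux {a b : ℝ} (h : a ^ 2 ≤ b ^ 2) (hb : 0 ≤ b) : a ≤ b :=
  abs_le_of_sq_le_sq' h hb |>.2

lemma aux_pyth {H : Type*} [NormedAddCommGroup H] [InnerProductSpace ℝ H]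
    (M : Submodule ℝ H) [M.HasOrthogonalProjection] (v u : H) (hu : u ∈ M) :
    ‖v - u‖ ^ 2 = ‖v - M.starProjection v‖ ^ 2 + ‖M.starProjection v - u‖ ^ 2 := by
  have h1 : inner ℝ (v - M.starProjection v) (M.starProjection v - u) = 0 :=
    M.starProjection_inner_eq_zero v _ (M.sub_mem (M.starProjection_apply_mem v) hu)
  have h2 : v - u = (v - M.starProjection v) + (M.starProjection v - u) := by abel
  rw [h2, norm_add_sq_real, h1]
  ring

lemma aux_mem {H : Type*} [NormedAddCommGroup H] [InnerProductSpace ℝ H]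
    (M : Submodule ℝ H) [M.HasOrthogonalProjection] (hM : M ≠ ⊥) (v : H) (r : ℝ) (hr : 0 ≤ r)
    (hv : v ∈ coneNbhd (M : Set H) r) : ‖v - M.starProjection v‖ ≤ r * ‖v‖ := by
  by_cases hv0 : v = 0
  · subst hv0; simp
  have hvn : 0 < ‖v‖ := norm_pos_iff.2 hv0
  rcases hv with hv | hv
  swap
  · exact absurd hv hv0
  rw [← div_le_iff₀ hvn]
  refine le_trans ?_ hv
  apply le_csInf
  · obtain ⟨u, hu, hu0⟩ := M.exists_mem_ne_zero_of_ne_bot hM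
    exact ⟨_, u, hu, hu0, rfl⟩
  rintro d ⟨u, hu, hu0, rfl⟩
  have hun : 0 < ‖u‖ := norm_pos_iff.2 hu0
  rw [div_le_div_iff₀ hvn hun]
  have h1 := aux_pyth M v u hu
  have h2 := aux_pyth M v 0 M.zero_mem
  simp only [sub_zero] at h2
  have h3 : ‖u‖ ≤ ‖M.starProjection v‖ + ‖M.starProjection v - u‖ := by
    have := norm_sub_le (M.starProjection v) (M.starProjection v - u)
    simpa using this
  set q := ‖v - M.starProjection v‖
  set p := ‖M.starProjection v‖
  set e := ‖M.starProjection v - u‖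
  have hq : 0 ≤ q := norm_nonneg _
  have hp : 0 ≤ p := norm_nonneg _
  have he : 0 ≤ e := norm_nonneg _
  have h4 : (q * ‖u‖) ^ 2 ≤ (‖v - u‖ * ‖v‖) ^ 2 := by
    have h5 : ‖u‖ ^ 2 ≤ (p + e) ^ 2 := pow_le_pow_left₀ hun.le h3 2
    rw [mul_pow, mul_pow, h1, h2]
    have h6 := mul_le_mul_of_nonneg_left h5 (sq_nonneg q)
    nlinarith [sq_nonneg (q ^ 2 - p * e)]
  exact le_of_sq_le_sq_aux h4 (by positivity)

lemma aux_mem' {H : Type*} [NormedAddCommGroup H] [InnerProductSpace ℝ H]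
    (M : Submodule ℝ H) [M.HasOrthogonalProjection] (hM : M ≠ ⊥) (v : H) (r : ℝ) (hr : 0 ≤ r)
    (hv : ‖v - M.starProjection v‖ ≤ r * ‖v‖) : v ∈ coneNbhd (M : Set H) r := by
  by_cases hv0 : v = 0
  · right; exact hv0
  left
  have hvn : 0 < ‖v‖ := norm_pos_iff.2 hv0
  have hbdd : BddBelow {d : ℝ | ∃ u ∈ (M : Set H), u ≠ 0 ∧ d = ‖v - u‖ / ‖u‖} := by
    refine ⟨0, ?_⟩
    rintro d ⟨u, _, _, rfl⟩
    positivity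
  by_cases hp0 : M.starProjection v = 0
  · have hr1 : 1 ≤ r := by
      rw [hp0, sub_zero] at hv
      nlinarith
    rw [Set.mem_ofPred_eq]
    apply le_of_forall_pos_le_add
    intro ε hε
    obtain ⟨u, hu, hu0⟩ := M.exists_mem_ne_zero_of_ne_bot hM
    have hun : 0 < ‖u‖ := norm_pos_iff.2 hu0
    have hc : 0 < ‖v‖ / (ε * ‖u‖) := by positivity
    have hw0 : (‖v‖ / (ε * ‖u‖)) • u ≠ 0 := smul_ne_zero hc.ne' hu0
    have hwn : ‖(‖v‖ / (ε * ‖u‖)) • u‖ = ‖v‖ / ε := by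
      rw [norm_smul, Real.norm_of_nonneg hc.le]; field_simp
    refine (csInf_le hbdd ⟨_, M.smul_mem _ hu, hw0, rfl⟩).trans ?_
    have h1 := norm_sub_le v ((‖v‖ / (ε * ‖u‖)) • u)
    rw [hwn] at h1 ⊢
    rw [div_le_iff₀ (by positivity)]
    have h2 : (1 + ε) * (‖v‖ / ε) = ‖v‖ + ‖v‖ / ε := by field_simp; ring
    have h3 : (1 + ε) * (‖v‖ / ε) ≤ (r + ε) * (‖v‖ / ε) := by gcongr
    linarith
  · have hpn : 0 < ‖M.starProjection v‖ := norm_pos_iff.2 hp0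
    have hmem := M.starProjection_apply_mem v
    have h2 := aux_pyth M v 0 M.zero_mem
    simp only [sub_zero] at h2
    set P := M.starProjection v with hP
    set c := ‖v‖ ^ 2 / ‖P‖ ^ 2 with hc
    have hcpos : 0 < c := by positivity
    have h1 := aux_pyth M v (c • P) (M.smul_mem _ hmem)
    rw [← hP] at h1
    have hcn : ‖c • P‖ = c * ‖P‖ := by rw [norm_smul, Real.norm_of_nonneg hcpos.le]
    have h3 : ‖P - c • P‖ ^ 2 = (1 - c) ^ 2 * ‖P‖ ^ 2 := by
      have : P - c • P = (1 - c) • P := by rw [sub_smul, one_smul]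
      rw [this, norm_smul, mul_pow, Real.norm_eq_abs, sq_abs]
    refine (csInf_le hbdd ⟨_, M.smul_mem c hmem, smul_ne_zero hcpos.ne' hp0, rfl⟩).trans ?_
    rw [hcn, div_le_iff₀ (by positivity)]
    apply le_of_sq_le_sq_aux _ (by positivity)
    rw [h1, h3]
    have h4 : ‖v - P‖ ^ 2 ≤ r ^ 2 * ‖v‖ ^ 2 := by
      rw [← mul_pow]; exact pow_le_pow_left₀ (norm_nonneg _) hv 2
    have h5 : c * ‖P‖ ^ 2 = ‖v‖ ^ 2 := by rw [hc]; field_simp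
    have h6 : ‖v - P‖ ^ 2 = (c - 1) * ‖P‖ ^ 2 := by linarith
    have h7 : ‖v - P‖ ^ 2 + (1 - c) ^ 2 * ‖P‖ ^ 2 = c * ‖v - P‖ ^ 2 := by rw [h6]; ring
    have h8 : (r * (c * ‖P‖)) ^ 2 = c * (r ^ 2 * ‖v‖ ^ 2) := by rw [← h5]; ring
    rw [h7, h8]
    gcongr

lemma aux_step {H : Type*} [NormedAddCommGroup H] [InnerProductSpace ℝ H]
    (M : Submodule ℝ H) [M.HasOrthogonalProjection] (v d : H) (θ φ : ℝ) (hθ : 0 ≤ θ) (hφ : 0 ≤ φ)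
    (hs : θ + φ ≤ Real.pi / 2)
    (hv : ‖v - M.starProjection v‖ ≤ Real.sin θ * ‖v‖) (hd : ‖d‖ ≤ Real.sin φ * ‖v‖) :
    ‖(v + d) - M.starProjection (v + d)‖ ≤ Real.sin (θ + φ) * ‖v + d‖ := by
  have hpi := Real.pi_pos
  have hS : 0 ≤ Real.sin (θ + φ) := Real.sin_nonneg_of_nonneg_of_le_pi (by linarith) (by linarith)
  have hC : 0 ≤ Real.cos (θ + φ) := Real.cos_nonneg_of_neg_pi_div_two_le_of_le (by linarith) hs
  have hCθ : 0 ≤ Real.cos θ :=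
    Real.cos_nonneg_of_neg_pi_div_two_le_of_le (by linarith) (by linarith)
  have hsc := Real.sin_sq_add_cos_sq (θ + φ)
  have hscθ := Real.sin_sq_add_cos_sq θ
  have key : Real.sin (θ + φ) * Real.cos θ - Real.cos (θ + φ) * Real.sin θ = Real.sin φ := by
    rw [← Real.sin_sub]; congr 1; ring
  have pv := aux_pyth M v 0 M.zero_mem
  have pd := aux_pyth M d 0 M.zero_mem
  have pw := aux_pyth M (v + d) 0 M.zero_mem
  simp only [sub_zero] at pv pd pw
  have t1 : ‖(v + d) - M.starProjection (v + d)‖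
      ≤ ‖v - M.starProjection v‖ + ‖d - M.starProjection d‖ := by
    rw [map_add, add_sub_add_comm]; exact norm_add_le _ _
  have t2 : ‖M.starProjection v‖ ≤ ‖M.starProjection (v + d)‖ + ‖M.starProjection d‖ := by
    have := norm_sub_le (M.starProjection (v + d)) (M.starProjection d)
    rwa [map_add, add_sub_cancel_right, ← map_add] at this
  have n1 := norm_nonneg ((v + d) - M.starProjection (v + d))
  have n2 := norm_nonneg (M.starProjection (v + d))
  have n3 := norm_nonneg (v - M.starProjection v)
  have n4 := norm_nonneg (M.starProjection v)
  have n5 := norm_nonneg v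
  have n6 := norm_nonneg d
  have n7 := norm_nonneg (v + d)
  generalize ‖(v + d) - M.starProjection (v + d)‖ = a at *
  generalize ‖M.starProjection (v + d)‖ = b at *
  generalize ‖v - M.starProjection v‖ = qv at *
  generalize ‖M.starProjection v‖ = p at *
  generalize ‖d - M.starProjection d‖ = qd at *
  generalize ‖M.starProjection d‖ = pd' at *
  generalize ‖v + d‖ = m at *
  generalize ‖v‖ = n at *
  generalize ‖d‖ = D at *
  generalize Real.sin (θ + φ) = S at *
  generalize Real.cos (θ + φ) = C at *
  generalize Real.sin θ = s at *
  generalize Real.cos θ = c at *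
  generalize Real.sin φ = f at *
  have e1 : c * n ≤ p := by
    apply le_of_sq_le_sq_aux _ n4
    have : qv ^ 2 ≤ (s * n) ^ 2 := pow_le_pow_left₀ n3 hv 2
    have h : c ^ 2 * n ^ 2 = n ^ 2 - (s * n) ^ 2 := by linear_combination n ^ 2 * hscθ
    rw [mul_pow, h]; linarith
  have e2 : C * qd + S * pd' ≤ D := by
    apply le_of_sq_le_sq_aux _ n6
    rw [pd]
    have h : (C * qd + S * pd') ^ 2 + (C * pd' - S * qd) ^ 2 = qd ^ 2 + pd' ^ 2 := by
      linear_combination (qd ^ 2 + pd' ^ 2) * hsc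
    nlinarith [sq_nonneg (C * pd' - S * qd)]
  have e3 : C * a ≤ S * b := by
    have g1 := mul_le_mul_of_nonneg_left t1 hC
    have g2 := mul_le_mul_of_nonneg_left t2 hS
    have g3 := mul_le_mul_of_nonneg_left e1 hS
    have g4 := mul_le_mul_of_nonneg_left hv hC
    have g5 : S * (c * n) - C * (s * n) = f * n := by rw [← key]; ring
    linarith
  apply le_of_sq_le_sq_aux _ (by positivity)
  have e4 : (C * a) ^ 2 ≤ (S * b) ^ 2 := pow_le_pow_left₀ (by positivity) e3 2
  have e5 : a ^ 2 = (C * a) ^ 2 + S ^ 2 * a ^ 2 := by linear_combination (-a ^ 2) * hsc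
  rw [mul_pow S m, pw, mul_add]
  rw [mul_pow S b] at e4
  linarith

lemma aux_chain {H : Type*} [NormedAddCommGroup H] [InnerProductSpace ℝ H]
    (M : Submodule ℝ H) [M.HasOrthogonalProjection] (θ : ℝ) (hθ : 0 ≤ θ) (v : H)
    (hv : ‖v - M.starProjection v‖ ≤ Real.sin θ * ‖v‖) (k : ℕ) :
    ∀ (r : Fin k → ℝ) (_ : ∀ j, 0 ≤ r j ∧ r j < 1)
    (_ : θ + ∑ j, Real.arcsin (r j) ≤ Real.pi / 2)
    (Δ : Fin k → H → H) (_ : ∀ j, ∀ u : H, ‖Δ j u‖ ≤ r j * ‖u‖),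
    ‖chain k Δ v - M.starProjection (chain k Δ v)‖ ≤
      Real.sin (θ + ∑ j, Real.arcsin (r j)) * ‖chain k Δ v‖ := by
  induction k with
  | zero => intro r _ _ Δ _; simpa [chain] using hv
  | succ k ih =>
    intro r hr hs Δ hΔ
    rw [Fin.sum_univ_castSucc, ← add_assoc] at hs ⊢
    have h0 : 0 ≤ Real.arcsin (r (Fin.last k)) := Real.arcsin_nonneg.2 (hr _).1
    have h1 : 0 ≤ ∑ j : Fin k, Real.arcsin (r j.castSucc) :=
      Finset.sum_nonneg fun j _ => Real.arcsin_nonneg.2 (hr _).1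
    have := ih (fun j => r j.castSucc) (fun j => hr _) (by linarith) (fun j => Δ j.castSucc)
      (fun j => hΔ _)
    refine aux_step M _ _ _ _ (by linarith) h0 hs this ?_
    rw [Real.sin_arcsin (by linarith [(hr (Fin.last k)).1]) (hr _).2.le]
    exact hΔ _ _

theorem stmt10 {H : Type*} [NormedAddCommGroup H] [InnerProductSpace ℝ H] [CompleteSpace H]
    (M : Submodule ℝ H) (hMc : IsClosed (M : Set H))
    (k : ℕ) (rp : ℝ) (hrp : 0 ≤ rp ∧ rp < 1)
    (r : Fin k → ℝ) (hr : ∀ j, 0 ≤ r j ∧ r j < 1)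
    (hsum : Real.arcsin rp + ∑ j, Real.arcsin (r j) ≤ Real.pi / 2)
    (G : Set H) (hG : G ⊆ coneNbhd (M : Set H) rp)
    (Δ : Fin k → H → H) (hΔ : ∀ j, ∀ u : H, ‖Δ j u‖ ≤ r j * ‖u‖) :
    ∀ g ∈ G, chain k Δ g ∈
      coneNbhd (M : Set H) (Real.sin (Real.arcsin rp + ∑ j, Real.arcsin (r j))) := by
  intro g hg
  have hpi := Real.pi_pos
  have h0 : 0 ≤ Real.arcsin rp := Real.arcsin_nonneg.2 hrp.1
  have h1 : 0 ≤ ∑ j, Real.arcsin (r j) :=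
    Finset.sum_nonneg fun j _ => Real.arcsin_nonneg.2 (hr _).1
  have hS : 0 ≤ Real.sin (Real.arcsin rp + ∑ j, Real.arcsin (r j)) :=
    Real.sin_nonneg_of_nonneg_of_le_pi (by linarith) (by linarith)
  by_cases hM : M = ⊥
  · left
    have : {d : ℝ | ∃ u ∈ (M : Set H), u ≠ 0 ∧ d = ‖chain k Δ g - u‖ / ‖u‖} = ∅ := by
      ext d
      simp only [Set.mem_setOf_eq, Set.mem_empty_iff_false, iff_false]
      rintro ⟨u, hu, hu0, _⟩
      rw [hM] at hu
      exact hu0 (by simpa using hu)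
    rw [Set.mem_setOf_eq, this, Real.sInf_empty]
    exact hS
  haveI : CompleteSpace M := hMc.completeSpace_coe
  apply aux_mem' M hM _ _ hS
  apply aux_chain M _ h0 g _ k r hr hsum Δ hΔ
  rw [Real.sin_arcsin (by linarith [hrp.1]) hrp.2.le]
  exact aux_mem M hM g rp hrp.1 (hG hg)
end

section
/- Let H be a real Hilbert space, N ⊆ H a closed linear subspace, r_c, r₁, …, r_m ∈ [0,1) with arcsin r_c + Σ_{j=1}^m arcsin r_j ≤ π/2, and for each j = 1, …, m let Δ_j : H → H be a map satisfying ‖Δ_j u‖ ≤ r_j ‖u‖ for all u ∈ H. If v ∈ H satisfies (I + Δ_m) ∘ ⋯ ∘ (I + Δ_1)(v) ∈ S(N, r_c), then v ∈ S(N, sin(arcsin r_c + Σ_{j=1}^m arcsin r_j)), where I denotes the identity map on H. -/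
lemma aux_angle {H : Type*} [NormedAddCommGroup H] [InnerProductSpace ℝ H] (u w : H) (s : ℝ)
    (hu : u ≠ 0) (hs : 0 ≤ s) (hs1 : s < 1) (h : ‖w - u‖ ≤ s * ‖u‖) :
    InnerProductGeometry.angle w u ≤ Real.arcsin s := by
  have hu0 : 0 < ‖u‖ := norm_pos_iff.mpr hu
  have hw : w ≠ 0 := by
    rintro rfl
    simp only [zero_sub, norm_neg] at h
    nlinarith
  have hw0 : 0 < ‖w‖ := norm_pos_iff.mpr hw
  rw [Real.arcsin_eq_arccos hs, InnerProductGeometry.angle]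
  apply Real.arccos_le_arccos
  rw [le_div_iff₀ (by positivity)]
  have h1 := norm_sub_sq_real w u
  have h2 : ‖w - u‖ ^ 2 ≤ (s * ‖u‖) ^ 2 := by gcongr
  have h3 : Real.sqrt (1 - s ^ 2) ^ 2 = 1 - s ^ 2 := Real.sq_sqrt (by nlinarith)
  set q := Real.sqrt (1 - s ^ 2)
  have h4 : q ^ 2 * ‖u‖ ^ 2 = (1 - s ^ 2) * ‖u‖ ^ 2 := by rw [h3]
  nlinarith [sq_nonneg (‖w‖ - q * ‖u‖)]

lemma aux_attain {H : Type*} [NormedAddCommGroup H] [InnerProductSpace ℝ H] (v u : H)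
    (hv : v ≠ 0) (hu : u ≠ 0) (h : InnerProductGeometry.angle v u < Real.pi / 2) :
    ∃ t : ℝ, t ≠ 0 ∧ ‖v - t • u‖ / ‖t • u‖ = Real.sin (InnerProductGeometry.angle v u) := by
  have hu0 : 0 < ‖u‖ := norm_pos_iff.mpr hu
  have hv0 : 0 < ‖v‖ := norm_pos_iff.mpr hv
  have ha := InnerProductGeometry.angle_nonneg v u
  have hc : 0 < Real.cos (InnerProductGeometry.angle v u) :=
    Real.cos_pos_of_mem_Ioo ⟨by linarith [Real.pi_pos], h⟩
  have hin := InnerProductGeometry.cos_angle_mul_norm_mul_norm v u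
  have hsc := Real.sin_sq_add_cos_sq (InnerProductGeometry.angle v u)
  have hs : 0 ≤ Real.sin (InnerProductGeometry.angle v u) := InnerProductGeometry.sin_angle_nonneg v u
  set c := Real.cos (InnerProductGeometry.angle v u)
  set s := Real.sin (InnerProductGeometry.angle v u)
  have ht : 0 < ‖v‖ / (c * ‖u‖) := by positivity
  refine ⟨‖v‖ / (c * ‖u‖), ht.ne', ?_⟩
  have hn : ‖(‖v‖ / (c * ‖u‖)) • u‖ = ‖v‖ / c := by
    rw [norm_smul, Real.norm_of_nonneg ht.le]; field_simp
  rw [hn, div_eq_iff (by positivity), ← sq_eq_sq₀ (norm_nonneg _) (by positivity),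
    norm_sub_sq_real, hn, inner_smul_right, ← hin]
  have : s ^ 2 = 1 - c ^ 2 := by linarith
  rw [mul_pow, this]
  field_simp
  ring

lemma aux_chain_s11 {H : Type*} [NormedAddCommGroup H] [InnerProductSpace ℝ H]
    (m : ℕ) (r : Fin m → ℝ) (hr : ∀ j, 0 ≤ r j ∧ r j < 1)
    (Δ : Fin m → H → H) (hΔ : ∀ j, ∀ u : H, ‖Δ j u‖ ≤ r j * ‖u‖) (v : H) (hv : v ≠ 0) :
    chain m Δ v ≠ 0 ∧ InnerProductGeometry.angle v (chain m Δ v) ≤ ∑ j, Real.arcsin (r j) := by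
  induction m with
  | zero => simp [chain, hv]
  | succ k ih =>
    obtain ⟨h1, h2⟩ := ih (fun j => r j.castSucc) (fun j => hr _) (fun j => Δ j.castSucc)
      (fun j => hΔ _)
    rw [Fin.sum_univ_castSucc]
    simp only [chain, Function.comp]
    set x := chain k (fun j => Δ j.castSucc) v
    have hx : 0 < ‖x‖ := norm_pos_iff.mpr h1
    have hd := hΔ (Fin.last k) x
    have hl := hr (Fin.last k)
    refine ⟨?_, ?_⟩
    · intro h0
      have : Δ (Fin.last k) x = -x := by
        rw [eq_neg_iff_add_eq_zero, add_comm]; exact h0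
      rw [this, norm_neg] at hd
      nlinarith
    · have h3 := aux_angle x (x + Δ (Fin.last k) x) _ h1 hl.1 hl.2 (by simpa using hd)
      rw [InnerProductGeometry.angle_comm] at h3
      have := InnerProductGeometry.angle_le_angle_add_angle v x (x + Δ (Fin.last k) x)
      linarith

theorem stmt11 {H : Type*} [NormedAddCommGroup H] [InnerProductSpace ℝ H] [CompleteSpace H]
    (N : Submodule ℝ H) (hNc : IsClosed (N : Set H))
    (m : ℕ) (rc : ℝ) (hrc : 0 ≤ rc ∧ rc < 1)
    (r : Fin m → ℝ) (hr : ∀ j, 0 ≤ r j ∧ r j < 1)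
    (hsum : Real.arcsin rc + ∑ j, Real.arcsin (r j) ≤ Real.pi / 2)
    (Δ : Fin m → H → H) (hΔ : ∀ j, ∀ u : H, ‖Δ j u‖ ≤ r j * ‖u‖)
    (v : H) (hv : chain m Δ v ∈ coneNbhd (N : Set H) rc) :
    v ∈ coneNbhd (N : Set H) (Real.sin (Real.arcsin rc + ∑ j, Real.arcsin (r j))) := by
  by_cases hv0 : v = 0
  · right; exact hv0
  left
  obtain ⟨hw0, hw⟩ := aux_chain_s11 m r hr Δ hΔ v hv0
  set w := chain m Δ v
  set A := ∑ j, Real.arcsin (r j)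
  have hA : 0 ≤ A := Finset.sum_nonneg fun j _ => Real.arcsin_nonneg.mpr (hr j).1
  have hB : 0 ≤ Real.arcsin rc := Real.arcsin_nonneg.mpr hrc.1
  have hv' : sInf {d : ℝ | ∃ u ∈ (N : Set H), u ≠ 0 ∧ d = ‖w - u‖ / ‖u‖} ≤ rc := by
    rcases hv with h | h
    · exact h
    · exact absurd h hw0
  have hbdd : BddBelow {d : ℝ | ∃ u ∈ (N : Set H), u ≠ 0 ∧ d = ‖v - u‖ / ‖u‖} :=
    ⟨0, by rintro d ⟨u, -, -, rfl⟩; positivity⟩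
  change sInf {d : ℝ | ∃ u ∈ (N : Set H), u ≠ 0 ∧ d = ‖v - u‖ / ‖u‖} ≤ _
  by_cases hN : ∃ u ∈ (N : Set H), u ≠ 0
  swap
  · have : {d : ℝ | ∃ u ∈ (N : Set H), u ≠ 0 ∧ d = ‖v - u‖ / ‖u‖} = ∅ := by
      ext d
      simp only [Set.mem_setOf_eq, Set.mem_empty_iff_false, iff_false]
      rintro ⟨u, h1, h2, -⟩
      exact hN ⟨u, h1, h2⟩
    rw [this, Real.sInf_empty]
    exact Real.sin_nonneg_of_nonneg_of_le_pi (by positivity) (by linarith [Real.pi_pos])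
  obtain ⟨u₀, hu₀, hu₀0⟩ := hN
  rcases hsum.eq_or_lt with heq | hlt
  · rw [heq, Real.sin_pi_div_two]
    apply le_of_forall_pos_le_add
    intro ε hε
    have hn : 0 < ‖u₀‖ := norm_pos_iff.mpr hu₀0
    have hvn : 0 < ‖v‖ := norm_pos_iff.mpr hv0
    have ht : 0 < ‖v‖ / (ε * ‖u₀‖) := by positivity
    refine (csInf_le hbdd ⟨(‖v‖ / (ε * ‖u₀‖)) • u₀, N.smul_mem _ hu₀,
      smul_ne_zero ht.ne' hu₀0, rfl⟩).trans ?_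
    have h2 : ‖(‖v‖ / (ε * ‖u₀‖)) • u₀‖ = ‖v‖ / ε := by
      rw [norm_smul, Real.norm_of_nonneg ht.le]; field_simp
    have h1 := norm_sub_le v ((‖v‖ / (ε * ‖u₀‖)) • u₀)
    rw [h2] at h1 ⊢
    rw [div_le_iff₀ (by positivity)]
    refine h1.trans (le_of_eq ?_)
    field_simp
    ring
  · have key : ∀ s, rc < s → s < 1 → Real.arcsin s + A < Real.pi / 2 →
        sInf {d : ℝ | ∃ u ∈ (N : Set H), u ≠ 0 ∧ d = ‖v - u‖ / ‖u‖} ≤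
          Real.sin (Real.arcsin s + A) := by
      intro s hs hs1 hsA
      obtain ⟨d, ⟨u, huN, hu0, rfl⟩, hd⟩ := exists_lt_of_csInf_lt
        (⟨_, u₀, hu₀, hu₀0, rfl⟩ : {d : ℝ | ∃ u ∈ (N : Set H), u ≠ 0 ∧ d = ‖w - u‖ / ‖u‖}.Nonempty)
        (hv'.trans_lt hs)
      have hun : 0 < ‖u‖ := norm_pos_iff.mpr hu0
      have h1 := aux_angle u w s hu0 (by linarith) hs1 ((div_lt_iff₀ hun).mp hd).le
      have h2 := InnerProductGeometry.angle_le_angle_add_angle v w u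
      obtain ⟨t, ht, hte⟩ := aux_attain v u hv0 hu0 (by linarith)
      refine (csInf_le hbdd ⟨t • u, N.smul_mem _ huN, smul_ne_zero ht hu0, rfl⟩).trans ?_
      rw [hte]
      apply Real.sin_le_sin_of_le_of_le_pi_div_two
      · linarith [InnerProductGeometry.angle_nonneg v u, Real.pi_pos]
      · exact hsA.le
      · linarith
    have hcont : Filter.Tendsto (fun s => Real.arcsin s + A) (nhdsWithin rc (Set.Ioi rc))
        (nhds (Real.arcsin rc + A)) :=
      ((Real.continuous_arcsin.add continuous_const).tendsto rc).mono_left nhdsWithin_le_nhds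
    refine ge_of_tendsto ((Real.continuous_sin.tendsto _).comp hcont) ?_
    filter_upwards [hcont.eventually_lt_const hlt, self_mem_nhdsWithin,
      nhdsWithin_le_nhds (Iio_mem_nhds hrc.2)] with s h1 h2 h3
    exact key s h2 h3 h1
end

section
/- Let H be a real normed vector space, L > 0, r₁, …, r_k ∈ [0,1), and for each j = 1, …, k let Δ_j : H → H satisfy ‖Δ_j x − Δ_j y‖ ≤ L‖x − y‖ and ‖Δ_j x‖ ≤ r_j‖x‖ for all x, y ∈ H. For s ∈ [0,1] define Φ_s := (I + s·Δ_k) ∘ ⋯ ∘ (I + s·Δ_1). Then for every ε > 0 there exists δ > 0 such that for all τ ≥ 0 with τ + δ ≤ 1 and every nonzero x ∈ H: ‖Φ_{τ+δ}(x) − Φ_τ(x)‖ ≤ ε·‖Φ_τ(x)‖. -/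
theorem chain_diff {H : Type*} [NormedAddCommGroup H] [NormedSpace ℝ H]
    (L : ℝ) (hL : 0 < L) (k : ℕ) (r : Fin k → ℝ) (hr : ∀ j, 0 ≤ r j ∧ r j < 1)
    (Δ : Fin k → H → H)
    (hLip : ∀ j, ∀ x y : H, ‖Δ j x - Δ j y‖ ≤ L * ‖x - y‖)
    (hbound : ∀ j, ∀ x : H, ‖Δ j x‖ ≤ r j * ‖x‖) :
    ∃ C : ℝ, 0 ≤ C ∧ ∀ τ δ : ℝ, 0 ≤ τ → 0 ≤ δ → τ + δ ≤ 1 → ∀ x : H,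
      ‖chain k (fun j y => (τ + δ) • Δ j y) x - chain k (fun j y => τ • Δ j y) x‖ ≤
        C * δ * ‖chain k (fun j y => τ • Δ j y) x‖ := by
  induction k with
  | zero => exact ⟨0, le_rfl, fun τ δ _ _ _ x => by simp [chain]⟩
  | succ k ih =>
    obtain ⟨C, hC, h⟩ := ih (fun j => r j.castSucc) (fun j => hr _) (fun j => Δ j.castSucc)
      (fun j => hLip _) (fun j => hbound _)
    have hr0 := (hr (Fin.last k)).1
    have hr1 : 0 < 1 - r (Fin.last k) := by linarith [(hr (Fin.last k)).2]
    refine ⟨((1 + L) * C + 1) / (1 - r (Fin.last k)), by positivity, ?_⟩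
    intro τ δ hτ hδ hs x
    have h1 := h τ δ hτ hδ hs x
    simp only [chain, Function.comp]
    generalize chain k (fun j y => (τ + δ) • Δ j.castSucc y) x = v at *
    generalize chain k (fun j y => τ • Δ j.castSucc y) x = u at *
    have hl := hLip (Fin.last k) v u
    have hb := hbound (Fin.last k) u
    generalize Δ (Fin.last k) v = dv at *
    generalize Δ (Fin.last k) u = du at *
    generalize r (Fin.last k) = ρ at *
    have hlow : (1 - ρ) * ‖u‖ ≤ ‖u + τ • du‖ := by
      have e : ‖u‖ ≤ ‖u + τ • du‖ + ‖τ • du‖ := by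
        simpa using norm_sub_le (u + τ • du) (τ • du)
      rw [norm_smul, Real.norm_of_nonneg hτ] at e
      nlinarith [norm_nonneg du]
    have hup : ‖v + (τ + δ) • dv - (u + τ • du)‖ ≤ ((1 + L) * C + 1) * δ * ‖u‖ := by
      have e : v + (τ + δ) • dv - (u + τ • du) = (v - u) + (τ + δ) • (dv - du) + δ • du := by
        module
      rw [e]
      have e2 := norm_add₃_le (a := v - u) (b := (τ + δ) • (dv - du)) (c := δ • du)
      rw [norm_smul, norm_smul, Real.norm_of_nonneg hδ,
        Real.norm_of_nonneg (add_nonneg hτ hδ)] at e2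
      have e3 : (τ + δ) * ‖dv - du‖ ≤ ‖dv - du‖ := mul_le_of_le_one_left (norm_nonneg _) hs
      have e4 : L * ‖v - u‖ ≤ L * (C * δ * ‖u‖) := mul_le_mul_of_nonneg_left h1 hL.le
      have e5 : ‖du‖ ≤ ‖u‖ := by nlinarith [norm_nonneg u]
      have e6 : δ * ‖du‖ ≤ δ * ‖u‖ := mul_le_mul_of_nonneg_left e5 hδ
      nlinarith
    refine hup.trans ?_
    have e : ((1 + L) * C + 1) * δ * ‖u‖
        = ((1 + L) * C + 1) / (1 - ρ) * δ * ((1 - ρ) * ‖u‖) := by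
      field_simp
    rw [e]
    exact mul_le_mul_of_nonneg_left hlow (by positivity)

theorem stmt14 {H : Type*} [NormedAddCommGroup H] [NormedSpace ℝ H]
    (L : ℝ) (hL : 0 < L)
    (k : ℕ) (r : Fin k → ℝ) (hr : ∀ j, 0 ≤ r j ∧ r j < 1)
    (Δ : Fin k → H → H)
    (hLip : ∀ j, ∀ x y : H, ‖Δ j x - Δ j y‖ ≤ L * ‖x - y‖)
    (hbound : ∀ j, ∀ x : H, ‖Δ j x‖ ≤ r j * ‖x‖) :
    ∀ ε > (0 : ℝ), ∃ δ > (0 : ℝ), ∀ τ : ℝ, 0 ≤ τ → τ + δ ≤ 1 → ∀ x : H, x ≠ 0 →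
      ‖chain k (fun j y => (τ + δ) • Δ j y) x - chain k (fun j y => τ • Δ j y) x‖ ≤
        ε * ‖chain k (fun j y => τ • Δ j y) x‖ := by
  intro ε hε
  obtain ⟨C, hC, h⟩ := chain_diff L hL k r hr Δ hLip hbound
  have hδ : 0 < ε / (C + 1) := by positivity
  refine ⟨ε / (C + 1), hδ, fun τ hτ hs x _ => (h τ _ hτ hδ.le hs x).trans ?_⟩
  refine mul_le_mul_of_nonneg_right ?_ (norm_nonneg _)
  rw [mul_div_assoc', div_le_iff₀ (by positivity)]
  nlinarith
end

section
/- Let H be a real inner product space and let u, v ∈ H be nonzero. Then inf_{t ∈ ℝ, t ≠ 0} ‖v − t·u‖ / (|t|·‖u‖) = sin θ(u,v) = √(1 − ⟨u,v⟩² / (‖u‖²·‖v‖²)). -/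
open RealInnerProductSpace

theorem stmt16 {H : Type*} [NormedAddCommGroup H] [InnerProductSpace ℝ H]
    (u v : H) (hu : u ≠ 0) (hv : v ≠ 0) :
    sInf {d : ℝ | ∃ t : ℝ, t ≠ 0 ∧ d = ‖v - t • u‖ / (|t| * ‖u‖)} =
        Real.sin (acuteAngle u v) ∧
      Real.sin (acuteAngle u v) =
        Real.sqrt (1 - ⟪u, v⟫ ^ 2 / (‖u‖ ^ 2 * ‖v‖ ^ 2)) := by
  have h2 : Real.sin (acuteAngle u v) =
        Real.sqrt (1 - ⟪u, v⟫ ^ 2 / (‖u‖ ^ 2 * ‖v‖ ^ 2)) := by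
    rw [acuteAngle, Real.sin_arccos, div_pow, sq_abs, mul_pow]
  refine ⟨?_, h2⟩
  rw [h2]
  have ha : 0 < ‖u‖ := norm_pos_iff.2 hu
  have hb : 0 < ‖v‖ := norm_pos_iff.2 hv
  have hS : 0 ≤ 1 - ⟪u, v⟫ ^ 2 / (‖u‖ ^ 2 * ‖v‖ ^ 2) := by
    rw [sub_nonneg, div_le_one (by positivity), ← mul_pow, ← sq_abs]
    exact pow_le_pow_left₀ (abs_nonneg _) (abs_real_inner_le_norm u v) 2
  have key : ∀ t : ℝ, t ≠ 0 → ‖v - t • u‖ / (|t| * ‖u‖) =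
      Real.sqrt ((1 - ⟪u, v⟫ ^ 2 / (‖u‖ ^ 2 * ‖v‖ ^ 2)) +
        (‖v‖ ^ 2 - t * ⟪u, v⟫) ^ 2 / (t ^ 2 * ‖u‖ ^ 2 * ‖v‖ ^ 2)) := by
    intro t ht
    symm
    rw [Real.sqrt_eq_iff_mul_self_eq (by positivity) (by positivity), ← sq, div_pow,
      norm_sub_sq_real, inner_smul_right, real_inner_comm, norm_smul, mul_pow, mul_pow, sq_abs,
      Real.norm_eq_abs, sq_abs]
    field_simp
    ring
  refine csInf_eq_of_forall_ge_of_forall_gt_exists_lt ⟨_, 1, one_ne_zero, rfl⟩ ?_ ?_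
  · rintro d ⟨t, ht, rfl⟩
    rw [key t ht]
    apply Real.sqrt_le_sqrt
    have : 0 ≤ (‖v‖ ^ 2 - t * ⟪u, v⟫) ^ 2 / (t ^ 2 * ‖u‖ ^ 2 * ‖v‖ ^ 2) := by positivity
    linarith
  · intro w hw
    by_cases hc : ⟪u, v⟫ = 0
    · simp only [hc] at hw
      have hw1 : 1 < w := by simpa using hw
      have hw0 : 0 < w - 1 := by linarith
      have ht : 2 * ‖v‖ / ((w - 1) * ‖u‖) ≠ 0 := by positivity
      refine ⟨_, ⟨_, ht, rfl⟩, ?_⟩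
      rw [key _ ht, hc, Real.sqrt_lt' (by linarith)]
      have : (‖v‖ ^ 2 - 2 * ‖v‖ / ((w - 1) * ‖u‖) * 0) ^ 2 /
          ((2 * ‖v‖ / ((w - 1) * ‖u‖)) ^ 2 * ‖u‖ ^ 2 * ‖v‖ ^ 2) = (w - 1) ^ 2 / 4 := by
        field_simp
        ring
      rw [this]
      simp only [ne_eq, OfNat.ofNat_ne_zero, not_false_eq_true, zero_pow, zero_div, sub_zero]
      nlinarith
    · have ht : ‖v‖ ^ 2 / ⟪u, v⟫ ≠ 0 := div_ne_zero (by positivity) hc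
      refine ⟨_, ⟨_, ht, rfl⟩, ?_⟩
      rw [key _ ht, div_mul_cancel₀ _ hc]
      simpa using hw
end
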